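/- arXiv:math/0208238 — 5 statements merged into one kernel-verified Lean document; each statement's English description precedes it below -/
import Mathlib

section
/- The product * is commutative and associative: for all i, j, k, n in {0,…,m}, N_{ij}^k = N_{ji}^k, and Σ_{p=0}^m N_{ij}^p · N_{pk}^n = Σ_{q=0}^m N_{jk}^q · N_{iq}^n. Hence (ℂ^{m+1}, *) is a commutative associative ℂ-algebra. -/
/-!
The characters `x ↦ Σ_i x_i S_{il} / S_{0l}` diagonalise the fusion product. Put
`x̂ l = Σ_i x_i S_{il}`. Expanding the Verlinde formula gives
`(x * y)_k = Σ_l x̂ l ŷ l conj(S_{lk}) / S_{0l}` (`fmul_eq_sum_vhat`), and orthonormality of the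
rows of `S`, together with symmetry, inverts this to `(x * y)^ l = x̂ l ŷ l / S_{0l}`
(`vhat_fmul`). Hence both bracketings of a triple product have `k`-th coordinate
`Σ_l x̂ l ŷ l ẑ l conj(S_{lk}) / S_{0l}²`. The identities for the structure constants are
the case of basis vectors.
-/

open Matrix BigOperators Finset

/-- Verlinde fusion coefficients `N_{ij}^k = Σ_l S_{il} S_{jl} conj(S_{lk}) / S_{0l}`. -/
noncomputable def Ncoef {m : ℕ} (S : Matrix (Fin (m+1)) (Fin (m+1)) ℂ)
    (i j k : Fin (m+1)) : ℂ :=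
  ∑ l, S i l * S j l * (starRingEnd ℂ) (S l k) / S 0 l

/-- The bilinear fusion product on `ℂ^{m+1}` determined by `v_i * v_j = Σ_k N_{ij}^k v_k`. -/
noncomputable def fmul {m : ℕ} (S : Matrix (Fin (m+1)) (Fin (m+1)) ℂ)
    (x y : Fin (m+1) → ℂ) : Fin (m+1) → ℂ :=
  fun k => ∑ i, ∑ j, x i * y j * Ncoef S i j k

/-- The transform `x̂ l = Σ_i x_i S_{il}` of a vector by `S`, that is, the row vector `x S`. -/
noncomputable def vhat {m : ℕ} (S : Matrix (Fin (m+1)) (Fin (m+1)) ℂ)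
    (x : Fin (m+1) → ℂ) (l : Fin (m+1)) : ℂ :=
  ∑ i, x i * S i l

theorem fmul_eq_sum_vhat {m : ℕ} (S : Matrix (Fin (m+1)) (Fin (m+1)) ℂ)
    (x y : Fin (m+1) → ℂ) (k : Fin (m+1)) :
    fmul S x y k = ∑ l, vhat S x l * vhat S y l / S 0 l * (starRingEnd ℂ) (S l k) := by
  have h : ∀ l, vhat S x l * vhat S y l / S 0 l * (starRingEnd ℂ) (S l k) =
      ∑ i, ∑ j, x i * y j * (S i l * S j l * (starRingEnd ℂ) (S l k) / S 0 l) := by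
    intro l
    rw [vhat, vhat, Finset.sum_mul_sum]
    simp only [Finset.sum_div, Finset.sum_mul]
    refine Finset.sum_congr rfl fun i _ => Finset.sum_congr rfl fun j _ => ?_
    ring
  simp only [h, fmul, Ncoef, Finset.mul_sum]
  rw [Finset.sum_comm (s := (Finset.univ : Finset (Fin (m+1))))
    (f := fun l i => ∑ j, x i * y j * (S i l * S j l * (starRingEnd ℂ) (S l k) / S 0 l))]
  exact Finset.sum_congr rfl fun i _ => Finset.sum_comm

theorem sum_conj_mul_eq_ite {m : ℕ} {S : Matrix (Fin (m+1)) (Fin (m+1)) ℂ}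
    (hU : S ∈ Matrix.unitaryGroup (Fin (m+1)) ℂ) (hSym : Sᵀ = S) (l l' : Fin (m+1)) :
    ∑ p, (starRingEnd ℂ) (S l p) * S p l' = if l' = l then 1 else 0 := by
  have h := congrFun (congrFun (Matrix.mem_unitaryGroup_iff.mp hU) l') l
  rw [Matrix.mul_apply, Matrix.one_apply] at h
  rw [← h]
  refine Finset.sum_congr rfl fun p _ => ?_
  have hs : S p l' = S l' p := congrFun (congrFun hSym l') p
  rw [hs, mul_comm, Matrix.star_apply, starRingEnd_apply]

/-- The transform turns the fusion product into the pointwise product, up to the weight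
`1 / S_{0l}`. -/
theorem vhat_fmul {m : ℕ} {S : Matrix (Fin (m+1)) (Fin (m+1)) ℂ}
    (hU : S ∈ Matrix.unitaryGroup (Fin (m+1)) ℂ) (hSym : Sᵀ = S)
    (x y : Fin (m+1) → ℂ) (l : Fin (m+1)) :
    vhat S (fmul S x y) l = vhat S x l * vhat S y l / S 0 l := by
  rw [vhat]
  simp only [fmul_eq_sum_vhat, Finset.sum_mul]
  rw [Finset.sum_comm]
  simp only [mul_assoc, ← Finset.mul_sum, sum_conj_mul_eq_ite hU hSym]
  simp

theorem fmul_assoc_of_unitary {m : ℕ} {S : Matrix (Fin (m+1)) (Fin (m+1)) ℂ}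
    (hU : S ∈ Matrix.unitaryGroup (Fin (m+1)) ℂ) (hSym : Sᵀ = S)
    (x y z : Fin (m+1) → ℂ) :
    fmul S (fmul S x y) z = fmul S x (fmul S y z) := by
  funext k
  rw [fmul_eq_sum_vhat, fmul_eq_sum_vhat]
  refine Finset.sum_congr rfl fun l _ => ?_
  rw [vhat_fmul hU hSym, vhat_fmul hU hSym]
  ring

theorem fmul_single_right {m : ℕ} (S : Matrix (Fin (m+1)) (Fin (m+1)) ℂ)
    (x : Fin (m+1) → ℂ) (j k : Fin (m+1)) :
    fmul S x (Pi.single j 1) k = ∑ p, x p * Ncoef S p j k := by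
  simp [fmul, Pi.single_apply]

theorem fmul_single_left {m : ℕ} (S : Matrix (Fin (m+1)) (Fin (m+1)) ℂ)
    (y : Fin (m+1) → ℂ) (i k : Fin (m+1)) :
    fmul S (Pi.single i 1) y k = ∑ q, y q * Ncoef S i q k := by
  simp [fmul, Pi.single_apply]

theorem fmul_single_single {m : ℕ} (S : Matrix (Fin (m+1)) (Fin (m+1)) ℂ)
    (i j k : Fin (m+1)) :
    fmul S (Pi.single i 1) (Pi.single j 1) k = Ncoef S i j k := by
  simp [fmul_single_right, Pi.single_apply]

theorem stmt2 {m : ℕ} (S : Matrix (Fin (m+1)) (Fin (m+1)) ℂ)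
    (hU : S ∈ Matrix.unitaryGroup (Fin (m+1)) ℂ)
    (hSym : Sᵀ = S)
    (h0 : ∀ l, S 0 l ≠ 0) :
    (∀ i j k : Fin (m+1), Ncoef S i j k = Ncoef S j i k) ∧
    (∀ i j k n : Fin (m+1),
      ∑ p, Ncoef S i j p * Ncoef S p k n = ∑ q, Ncoef S j k q * Ncoef S i q n) ∧
    (∀ x y : Fin (m+1) → ℂ, fmul S x y = fmul S y x) ∧
    (∀ x y z : Fin (m+1) → ℂ, fmul S (fmul S x y) z = fmul S x (fmul S y z)) := by
  refine ⟨fun i j k => ?_, fun i j k n => ?_, fun x y => ?_, fmul_assoc_of_unitary hU hSym⟩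
  · simp only [Ncoef, mul_comm (S i _)]
  · have h := congrFun (fmul_assoc_of_unitary hU hSym
      (Pi.single i 1) (Pi.single j 1) (Pi.single k 1)) n
    rw [fmul_single_right, fmul_single_left] at h
    simpa only [fmul_single_single] using h
  · funext k
    simp only [fmul_eq_sum_vhat, mul_comm (vhat S x _)]
end

section
/- The S-matrix diagonalizes the fusion rules: for each i ∈ {0,…,m}, let N_i be the (m+1)×(m+1) matrix with entries (N_i)_{kj} := N_{ij}^k (the matrix of left multiplication by v_i in the basis v_0,…,v_m), and let D_i be the diagonal matrix with diagonal entries (D_i)_{ll} := S_{il}/S_{0l}. Then S · N_i = D_i · S. -/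
open Matrix BigOperators Finset

theorem stmt3 {m : ℕ} (S : Matrix (Fin (m+1)) (Fin (m+1)) ℂ)
    (hU : S ∈ Matrix.unitaryGroup (Fin (m+1)) ℂ)
    (hSym : Sᵀ = S)
    (h0 : ∀ l, S 0 l ≠ 0)
    (i : Fin (m+1))
    -- `Nmat` is the matrix of left multiplication by `v_i`: `(Nmat)_{k j} = N_{ij}^k`.
    (Nmat : Matrix (Fin (m+1)) (Fin (m+1)) ℂ)
    (hN : ∀ k j, Nmat k j = Ncoef S i j k)
    -- `Dmat` is the diagonal matrix with entries `S_{il}/S_{0l}`.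
    (Dmat : Matrix (Fin (m+1)) (Fin (m+1)) ℂ)
    (hD : Dmat = Matrix.diagonal (fun l => S i l / S 0 l)) :
    S * Nmat = Dmat * S := by
  -- By symmetry of `S`, Verlinde's formula says exactly that `N_i = Sᴴ D_i S`.
  have hfac : Nmat = Sᴴ * (Dmat * S) := by
    ext k j
    rw [hN, Ncoef, hD, Matrix.mul_apply]
    refine Finset.sum_congr rfl fun l _ => ?_
    have hs : S j l = S l j := congrFun (congrFun hSym l) j
    rw [Matrix.diagonal_mul, Matrix.conjTranspose_apply, hs, starRingEnd_apply]
    ring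
  have hSS : S * Sᴴ = 1 := Matrix.mem_unitaryGroup_iff.mp hU
  rw [hfac, ← Matrix.mul_assoc, hSS, Matrix.one_mul]
end

section
/- The vectors w_0, …, w_m are mutually orthogonal idempotents of the fusion product: for all a, b in {0,…,m}, w_a * w_b = δ_{ab} w_a. -/
/-!
The Verlinde formula diagonalizes the fusion product: summing over `i` and `j` first gives
`(x * y)_k = Σ_l (Σ_i x_i S_{il}) (Σ_j y_j S_{jl}) conj(S_{lk}) / S_{0l}` (`fmul_eq_sum`).
By unitarity the pairing of `w_a` with the `l`-th column of `S` is `δ_{al} S_{0a}`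
(`sum_wvec_mul`), so only `l = a = b` contributes, and that term is `S_{0a} conj(S_{ak})`, which is
`(w_a)_k` because `S` is symmetric.
-/

open Matrix BigOperators Finset

/-- The vector `w_a` with coordinates `(w_a)_j = S_{0a} · conj(S_{ja})`. -/
noncomputable def wvec {m : ℕ} (S : Matrix (Fin (m+1)) (Fin (m+1)) ℂ)
    (a : Fin (m+1)) : Fin (m+1) → ℂ :=
  fun j => S 0 a * (starRingEnd ℂ) (S j a)

/-- The columns of a unitary matrix are orthonormal. -/
lemma sum_conj_mul_of_unitary {m : ℕ} {S : Matrix (Fin (m+1)) (Fin (m+1)) ℂ}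
    (hU : S ∈ Matrix.unitaryGroup (Fin (m+1)) ℂ) (a l : Fin (m+1)) :
    ∑ i, (starRingEnd ℂ) (S i a) * S i l = if a = l then 1 else 0 := by
  have h := congrFun (congrFun (Matrix.mem_unitaryGroup_iff'.mp hU) a) l
  simpa [Matrix.mul_apply, Matrix.one_apply, Matrix.star_apply] using h

/-- The fusion product diagonalized: it depends on `x` and `y` only through the products of their
pairings with each column of `S`. -/
lemma fmul_eq_sum {m : ℕ} (S : Matrix (Fin (m+1)) (Fin (m+1)) ℂ)
    (x y : Fin (m+1) → ℂ) (k : Fin (m+1)) :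
    fmul S x y k = ∑ l, (∑ i, x i * S i l) * (∑ j, y j * S j l) *
      ((starRingEnd ℂ) (S l k) / S 0 l) := by
  simp only [fmul, Ncoef, Finset.sum_mul, Finset.mul_sum]
  rw [Finset.sum_comm]
  conv_rhs => rw [Finset.sum_comm]
  refine Finset.sum_congr rfl fun i _ => ?_
  conv_rhs => rw [Finset.sum_comm]
  exact Finset.sum_congr rfl fun j _ => Finset.sum_congr rfl fun l _ => by ring

/-- The pairing of `w_a` with the `l`-th column of `S`. -/
lemma sum_wvec_mul {m : ℕ} {S : Matrix (Fin (m+1)) (Fin (m+1)) ℂ}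
    (hU : S ∈ Matrix.unitaryGroup (Fin (m+1)) ℂ) (a l : Fin (m+1)) :
    ∑ i, wvec S a i * S i l = if a = l then S 0 a else 0 := by
  simp only [wvec, mul_assoc, ← Finset.mul_sum, sum_conj_mul_of_unitary hU, mul_ite, mul_one,
    mul_zero]

theorem stmt4 {m : ℕ} (S : Matrix (Fin (m+1)) (Fin (m+1)) ℂ)
    (hU : S ∈ Matrix.unitaryGroup (Fin (m+1)) ℂ)
    (hSym : Sᵀ = S)
    (h0 : ∀ l, S 0 l ≠ 0)
    (a b : Fin (m+1)) :
    fmul S (wvec S a) (wvec S b) = if a = b then wvec S a else 0 := by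
  funext k
  simp only [fmul_eq_sum, sum_wvec_mul hU, ite_mul, zero_mul, Finset.sum_ite_eq,
    Finset.mem_univ, if_true]
  by_cases hab : a = b
  · subst hab
    have hk : S a k = S k a := congrFun (congrFun hSym k) a
    have := h0 a
    simp only [if_true, wvec, hk]
    field_simp
  · simp [hab, Ne.symm hab]
end

section
/- Each w_a is a simultaneous eigenvector of the fusion multiplication operators: for all i, a in {0,…,m}, v_i * w_a = (S_{ia}/S_{0a}) · w_a. -/
/-!
Expanding `v_i * w_a` and summing over the coordinates of `w_a` first, the inner sum
`Σ_j S_{jl} conj(S_{ja})` is `δ_{la}` because the columns of a unitary matrix are orthonormal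
(`column_orthonormal`). Only the term `l = a` of the Verlinde formula survives, and symmetry of `S`
turns its factor `conj(S_{ak})` into the coordinate `conj(S_{ka})` of the eigenvector.
-/


open Matrix BigOperators Finset

theorem column_orthonormal {m : ℕ} (S : Matrix (Fin (m+1)) (Fin (m+1)) ℂ)
    (hU : S ∈ Matrix.unitaryGroup (Fin (m+1)) ℂ) (l a : Fin (m+1)) :
    ∑ j, S j l * (starRingEnd ℂ) (S j a) = if l = a then 1 else 0 := by
  have h := congrFun (congrFun (Matrix.mem_unitaryGroup_iff'.mp hU) a) l
  rw [Matrix.mul_apply, Matrix.one_apply] at h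
  simp only [Matrix.star_apply] at h
  simp only [eq_comm (a := l), ← h, starRingEnd_apply, mul_comm]

theorem stmt7 {m : ℕ} (S : Matrix (Fin (m+1)) (Fin (m+1)) ℂ)
    (hU : S ∈ Matrix.unitaryGroup (Fin (m+1)) ℂ)
    (hSym : Sᵀ = S)
    (h0 : ∀ l, S 0 l ≠ 0)
    (i a : Fin (m+1)) :
    fmul S (Pi.single i 1) (wvec S a) = (S i a / S 0 a) • wvec S a := by
  funext k
  have hka : S a k = S k a := congrFun (congrFun hSym k) a
  calc fmul S (Pi.single i 1) (wvec S a) k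
      = ∑ j, wvec S a j * Ncoef S i j k := by
        unfold fmul
        rw [Finset.sum_eq_single i (fun b _ hb => by simp [hb]) (by simp)]
        simp
    _ = ∑ l, S 0 a * (S i l * (starRingEnd ℂ) (S l k) / S 0 l)
          * ∑ j, S j l * (starRingEnd ℂ) (S j a) := by
        simp only [wvec, Ncoef, Finset.mul_sum]
        rw [Finset.sum_comm]
        refine Finset.sum_congr rfl fun l _ => Finset.sum_congr rfl fun j _ => ?_
        ring
    _ = S 0 a * (S i a * (starRingEnd ℂ) (S a k) / S 0 a) := by
        simp [column_orthonormal S hU]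
    _ = ((S i a / S 0 a) • wvec S a) k := by
        simp only [wvec, Pi.smul_apply, smul_eq_mul, hka]
        ring
end

section
/- The linear map Φ : ℂ^{m+1} → ℂ^{m+1} defined by Φ(x)_l := Σ_{j=0}^m x_j · S_{jl} / S_{0l} is a ℂ-algebra isomorphism from the fusion algebra (ℂ^{m+1}, *, unit v_0) onto ℂ^{m+1} equipped with coordinatewise multiplication and unit (1,1,…,1). -/
/-!
Up to the invertible diagonal scaling by `S 0 l`, the map `Φ` is right multiplication by the
unitary matrix `S`, so it is bijective with inverse `Ψ(y) = (y · S 0) ᵥ* Sᴴ`.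
Verlinde's formula says exactly that the fusion product is the coordinatewise product transported
along `Φ`, i.e. `x * y = Ψ (Φ x · Φ y)`; this is where the symmetry of `S` enters, since the formula
has `conj (S l k)` where `Sᴴ l k = conj (S k l)`. Applying `Φ` gives multiplicativity.
-/

open Matrix BigOperators Finset

/-- The map `Φ(x)_l = Σ_j x_j S_{jl} / S_{0l}` diagonalizing the fusion algebra. -/
noncomputable def Phi {m : ℕ} (S : Matrix (Fin (m+1)) (Fin (m+1)) ℂ)
    (x : Fin (m+1) → ℂ) : Fin (m+1) → ℂ :=
  fun l => ∑ j, x j * S j l / S 0 l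

/-- The inverse `Ψ(y)_k = Σ_l y_l S_{0l} conj(S_{kl})` of `Phi S` for unitary `S`. -/
noncomputable def PhiInv {m : ℕ} (S : Matrix (Fin (m+1)) (Fin (m+1)) ℂ)
    (y : Fin (m+1) → ℂ) : Fin (m+1) → ℂ :=
  (fun l => y l * S 0 l) ᵥ* Sᴴ

lemma Phi_apply {m : ℕ} (S : Matrix (Fin (m+1)) (Fin (m+1)) ℂ)
    (x : Fin (m+1) → ℂ) (l : Fin (m+1)) : Phi S x l = (x ᵥ* S) l / S 0 l := by
  simp only [Phi, vecMul, dotProduct, Finset.sum_div]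

lemma Phi_PhiInv {m : ℕ} (S : Matrix (Fin (m+1)) (Fin (m+1)) ℂ)
    (hU : S ∈ Matrix.unitaryGroup (Fin (m+1)) ℂ) (h0 : ∀ l, S 0 l ≠ 0)
    (y : Fin (m+1) → ℂ) : Phi S (PhiInv S y) = y := by
  have h : Sᴴ * S = 1 := Matrix.mem_unitaryGroup_iff'.mp hU
  funext l
  rw [Phi_apply, PhiInv, vecMul_vecMul, h, vecMul_one]
  exact mul_div_cancel_right₀ _ (h0 l)

lemma PhiInv_Phi {m : ℕ} (S : Matrix (Fin (m+1)) (Fin (m+1)) ℂ)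
    (hU : S ∈ Matrix.unitaryGroup (Fin (m+1)) ℂ) (h0 : ∀ l, S 0 l ≠ 0)
    (x : Fin (m+1) → ℂ) : PhiInv S (Phi S x) = x := by
  have h : S * Sᴴ = 1 := Matrix.mem_unitaryGroup_iff.mp hU
  have hx : (fun l => Phi S x l * S 0 l) = x ᵥ* S := by
    funext l
    rw [Phi_apply, div_mul_cancel₀ _ (h0 l)]
  rw [PhiInv, hx, vecMul_vecMul, h, vecMul_one]

/-- Verlinde's formula: the fusion product is the coordinatewise product transported along `Φ`. -/
lemma fmul_eq_PhiInv {m : ℕ} (S : Matrix (Fin (m+1)) (Fin (m+1)) ℂ)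
    (hSym : Sᵀ = S) (h0 : ∀ l, S 0 l ≠ 0) (x y : Fin (m+1) → ℂ) :
    fmul S x y = PhiInv S (Phi S x * Phi S y) := by
  funext k
  -- Symmetry turns `conj (S l k)` into the entry `Sᴴ l k`.
  have hs : ∀ l, S l k = S k l := fun l => congrFun (congrFun hSym k) l
  calc fmul S x y k
      = ∑ i, ∑ j, ∑ l, x i * y j * (S i l * S j l * (starRingEnd ℂ) (S l k) / S 0 l) := by
        simp only [fmul, Ncoef, Finset.mul_sum]
    _ = ∑ l, ∑ i, ∑ j, x i * y j * (S i l * S j l * (starRingEnd ℂ) (S l k) / S 0 l) := by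
        rw [Finset.sum_comm (f := fun l i => ∑ j, x i * y j *
          (S i l * S j l * (starRingEnd ℂ) (S l k) / S 0 l))]
        exact Finset.sum_congr rfl fun i _ => Finset.sum_comm
    _ = PhiInv S (Phi S x * Phi S y) k := by
        simp only [PhiInv, vecMul, dotProduct, Pi.mul_apply, Phi, conjTranspose_apply, hs]
        simp only [Finset.sum_mul_sum]
        simp only [Finset.sum_mul]
        refine Finset.sum_congr rfl fun l _ => Finset.sum_congr rfl fun i _ =>
          Finset.sum_congr rfl fun j _ => ?_
        have hl := h0 l
        rw [starRingEnd_apply]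
        field_simp

theorem stmt8 {m : ℕ} (S : Matrix (Fin (m+1)) (Fin (m+1)) ℂ)
    (hU : S ∈ Matrix.unitaryGroup (Fin (m+1)) ℂ)
    (hSym : Sᵀ = S)
    (h0 : ∀ l, S 0 l ≠ 0) :
    -- `Φ` is ℂ-linear
    (∀ (c : ℂ) (x y : Fin (m+1) → ℂ), Phi S (c • x + y) = c • Phi S x + Phi S y) ∧
    -- `Φ` is bijective
    Function.Bijective (Phi S) ∧
    -- `Φ` sends the fusion product to the coordinatewise product
    (∀ x y : Fin (m+1) → ℂ, Phi S (fmul S x y) = Phi S x * Phi S y) ∧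
    -- `Φ` sends the unit `v_0` to the constant function `1`
    Phi S (Pi.single 0 1) = fun _ => (1 : ℂ) := by
  refine ⟨fun c x y => ?_, ?_, fun x y => ?_, ?_⟩
  · funext l
    simp only [Phi_apply, add_vecMul, smul_vecMul, Pi.add_apply, Pi.smul_apply, smul_eq_mul]
    ring
  · exact Function.bijective_iff_has_inverse.mpr
      ⟨PhiInv S, PhiInv_Phi S hU h0, Phi_PhiInv S hU h0⟩
  · rw [fmul_eq_PhiInv S hSym h0, Phi_PhiInv S hU h0]
  · funext l
    rw [Phi_apply, single_one_vecMul]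
    exact div_self (h0 l)
end
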